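/- Let b_4 : ℕ → {0,1,2,3} be the fixed point starting with 0 of the morphism 0 ↦ 01, 1 ↦ 21, 2 ↦ 03, 3 ↦ 23, and let g_2 be the 19-uniform morphism from {0,1,2,3}* to {0,1}* defined by g_2(0) = 0000101001110110100, g_2(1) = 0011100010100111101, g_2(2) = 0000111100010110100, g_2(3) = 0011110110100111101. Then the infinite binary word g_2(b_4) avoids every circular formula C_i with i ≥ 4. -/

import Mathlib

/-- `u` is a factor of the infinite word `x`. -/
def IsFactorOfInf {α : Type*} (u : List α) (x : ℕ → α) : Prop :=
  ∃ i : ℕ, u = (List.range u.length).map fun j => x (i + j)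

/-- The `i`-th fragment `A_i A_{i+1} … A_{i+t}` of the circular formula `C_t`,
as the list of variable indices (taken modulo `t`), of length `t + 1`. -/
def circFragment (t i : ℕ) : List ℕ :=
  (List.range (t + 1)).map fun j => (i + j) % t

/-- `h` is an occurrence of the circular formula `C_t` in the infinite word `x`:
`h` assigns a nonempty word to each of the `t` variables, and the `h`-image of
every fragment of `C_t` is a factor of `x`. -/
def CircOcc {α : Type*} (t : ℕ) (h : ℕ → List α) (x : ℕ → α) : Prop :=
  (∀ v < t, h v ≠ []) ∧ ∀ i < t, IsFactorOfInf ((circFragment t i).flatMap h) x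

/-- The morphism `0 ↦ 01, 1 ↦ 21, 2 ↦ 03, 3 ↦ 23` whose fixed point
starting with `0` is `b₄`. -/
def mb4 : Fin 4 → List (Fin 4) := ![[0, 1], [2, 1], [0, 3], [2, 3]]

/-- The 19-uniform morphism `g₂ : {0,1,2,3}* → {0,1}*`. -/
def g2 : Fin 4 → List (Fin 2) :=
  ![[0, 0, 0, 0, 1, 0, 1, 0, 0, 1, 1, 1, 0, 1, 1, 0, 1, 0, 0],
    [0, 0, 1, 1, 1, 0, 0, 0, 1, 0, 1, 0, 0, 1, 1, 1, 1, 0, 1],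
    [0, 0, 0, 0, 1, 1, 1, 1, 0, 0, 0, 1, 0, 1, 1, 0, 1, 0, 0],
    [0, 0, 1, 1, 1, 1, 0, 1, 1, 0, 1, 0, 0, 1, 1, 1, 1, 0, 1]]

/-- Even positions of `b₄`. -/
theorem b4_even (b4 : ℕ → Fin 4) (hb0 : b4 0 = 0)
    (hfix : ∀ n, [b4 (2 * n), b4 (2 * n + 1)] = mb4 (b4 n)) (n : ℕ) :
    ((b4 (2 * n) = 0 ∧ n % 2 = 0) ∨ (b4 (2 * n) = 2 ∧ n % 2 = 1)) ∧
    ((b4 (2 * n + 1) = 1 ∧ (b4 n = 0 ∨ b4 n = 1)) ∨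
      (b4 (2 * n + 1) = 3 ∧ (b4 n = 2 ∨ b4 n = 3))) ∧
    ((b4 n).val % 2 = n % 2) := by
  have key : ∀ a u v : Fin 4, [u, v] = mb4 a →
      ((u = 0 ∧ a.val % 2 = 0) ∨ (u = 2 ∧ a.val % 2 = 1)) ∧
      ((v = 1 ∧ (a = 0 ∨ a = 1)) ∨ (v = 3 ∧ (a = 2 ∨ a = 3))) := by
    intro a u v
    fin_cases a <;> simp [mb4]
  have par : ∀ n, (b4 n).val % 2 = n % 2 := by
    intro n
    rcases Nat.even_or_odd' n with ⟨m, hm | hm⟩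
    · have := (key _ _ _ (hfix m)).1
      rw [hm]
      rcases this with ⟨h, _⟩ | ⟨h, _⟩ <;> rw [h] <;> simp
    · have := (key _ _ _ (hfix m)).2
      rw [hm]
      rcases this with ⟨h, _⟩ | ⟨h, _⟩ <;> rw [h] <;> simp
  have := key _ _ _ (hfix n)
  rw [par n] at this
  exact ⟨this.1, this.2, par n⟩

/-- A periodic word all of whose windows of length `L + 1` are factors of `x`. -/
def BadPer {α : Type*} (x : ℕ → α) (L : ℕ) (c : ℕ → α) : Prop :=
  (∀ n, c (n + L) = c n) ∧ ∀ p, ∃ q, ∀ k ≤ L, x (q + k) = c (p + k)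

theorem BadPer.shift {α : Type*} {x : ℕ → α} {L : ℕ} {c : ℕ → α} (h : BadPer x L c) (s : ℕ) :
    BadPer x L (fun n => c (n + s)) := by
  refine ⟨fun n => ?_, fun p => ?_⟩
  · have := h.1 (n + s)
    simp only
    rw [← this]; congr 1; omega
  · obtain ⟨q, hq⟩ := h.2 (p + s)
    refine ⟨q, fun k hk => ?_⟩
    rw [hq k hk]; congr 1; omega

theorem b4_avoid (b4 : ℕ → Fin 4) (hb0 : b4 0 = 0)
    (hfix : ∀ n, [b4 (2 * n), b4 (2 * n + 1)] = mb4 (b4 n)) :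
    ∀ L, 1 ≤ L → ∀ c, ¬ BadPer b4 L c := by
  have E := fun n => (b4_even b4 hb0 hfix n).1
  have O := fun n => (b4_even b4 hb0 hfix n).2.1
  have par := fun n => (b4_even b4 hb0 hfix n).2.2
  intro L
  induction L using Nat.strong_induction_on with
  | _ L ih =>
  intro hL c0 hc0
  -- the letter parities of the periodic word alternate
  have alt : ∀ c, BadPer b4 L c → ∀ n, ((c (n + 1)).val % 2 = ((c n).val + 1) % 2) := by
    intro c hc n
    obtain ⟨q, hq⟩ := hc.2 n
    have h0 := hq 0 (by omega)
    have h1 := hq 1 (by omega)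
    rw [← h1, par, ← add_zero n, ← h0]
    have := par (q + 0)
    omega
  obtain ⟨c1, hc1, hc10⟩ : ∃ c, BadPer b4 L c ∧ (c 0).val % 2 = 0 := by
    by_cases h : (c0 0).val % 2 = 0
    · exact ⟨c0, hc0, h⟩
    · refine ⟨_, hc0.shift 1, ?_⟩
      have := alt c0 hc0 0
      simp only [zero_add] at this ⊢
      omega
  have cpar : ∀ c, BadPer b4 L c → (c 0).val % 2 = 0 → ∀ n, (c n).val % 2 = n % 2 := by
    intro c hc h0 n
    induction n with
    | zero => simpa using h0
    | succ n ihn => have := alt c hc n; omega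
  have hLe : L % 2 = 0 := by
    have h1 := cpar c1 hc1 hc10 (0 + L)
    rw [hc1.1 0] at h1
    omega
  -- alternation of even letters
  have alt2 : ∀ c, BadPer b4 L c → (c 0).val % 2 = 0 → ∀ n, 
      (c (2 * n) = 0 ∧ c (2 * (n + 1)) = 2) ∨ (c (2 * n) = 2 ∧ c (2 * (n + 1)) = 0) := by
    intro c hc h0 n
    obtain ⟨q, hq⟩ := hc.2 (2 * n)
    have a0 := hq 0 (by omega)
    have a2 := hq 2 (by omega)
    have hp := par (q + 0)
    rw [a0] at hp
    have hp' := cpar c hc h0 (2 * n + 0)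
    obtain ⟨r, rfl⟩ : ∃ r, q = 2 * r := ⟨q / 2, by omega⟩
    have e0 := E r
    have e1 := E (r + 1)
    rw [show 2 * (r + 1) = 2 * r + 2 by ring, a2] at e1
    rw [show 2 * r = 2 * r + 0 by ring, a0] at e0
    rw [show 2 * (n + 1) = 2 * n + 2 by ring]
    simp only [add_zero] at e0
    rcases e0 with ⟨u, v⟩ | ⟨u, v⟩ <;> rcases e1 with ⟨u', v'⟩ | ⟨u', v'⟩
    · omega
    · exact Or.inl ⟨u, u'⟩
    · exact Or.inr ⟨u, u'⟩
    · omega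
  obtain ⟨c, hc, hc0'⟩ : ∃ c, BadPer b4 L c ∧ c 0 = 0 := by
    rcases alt2 c1 hc1 hc10 0 with ⟨h, _⟩ | ⟨_, h⟩
    · exact ⟨c1, hc1, by simpa using h⟩
    · exact ⟨_, hc1.shift 2, by simpa using h⟩
  have hcp := cpar c hc (by rw [hc0']; rfl)
  have ha2 := alt2 c hc (by rw [hc0']; rfl)
  have cE : ∀ n, (n % 2 = 0 ∧ c (2 * n) = 0) ∨ (n % 2 = 1 ∧ c (2 * n) = 2) := by
    intro n
    induction n with
    | zero => left; simpa using hc0'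
    | succ n ihn =>
      rcases ihn with ⟨h, h'⟩ | ⟨h, h'⟩ <;> rcases ha2 n with ⟨u, v⟩ | ⟨u, v⟩
      · right; exact ⟨by omega, v⟩
      · rw [h'] at u; exact absurd u (by decide)
      · rw [h'] at u; exact absurd u (by decide)
      · left; exact ⟨by omega, v⟩
  obtain ⟨M, rfl⟩ : ∃ M, L = 2 * M := ⟨L / 2, by omega⟩
  have hM : M % 2 = 0 := by
    rcases cE M with ⟨h, _⟩ | ⟨_, h⟩
    · exact h
    · have := hc.1 0
      rw [zero_add, h, hc0'] at this
      exact absurd this (by decide)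
  -- desubstitution
  let dd : ℕ → Fin 4 → Fin 4 := fun j v =>
    if v = 1 then (if j % 2 = 0 then 0 else 1) else (if j % 2 = 0 then 2 else 3)
  have hdd : ∀ j, dd j (b4 (2 * j + 1)) = b4 j := by
    intro j
    have hp := par j
    rcases O j with ⟨h, h' | h'⟩ | ⟨h, h' | h'⟩ <;> rw [h'] at hp ⊢ <;> simp [dd, h] <;>
      simp at hp <;> omega
  have dpar : ∀ i j v, i % 2 = j % 2 → dd i v = dd j v := by
    intro i j v h
    simp only [dd, h]
  refine ih M (by omega) (by omega) (fun j => dd j (c (2 * j + 1))) ⟨fun n => ?_, fun j => ?_⟩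
  · have := hc.1 (2 * n + 1)
    simp only
    rw [show 2 * (n + M) + 1 = 2 * n + 1 + 2 * M by ring, this]
    exact dpar _ _ _ (by omega)
  · obtain ⟨q, hq⟩ := hc.2 (2 * j + 1)
    have h0 := hq 0 (by omega)
    have h1 := hq 1 (by omega)
    have hp := par (q + 0)
    rw [h0] at hp
    have hp' := hcp (2 * j + 1 + 0)
    obtain ⟨r, rfl⟩ : ∃ r, q = 2 * r + 1 := ⟨q / 2, by omega⟩
    have hr : r % 2 = j % 2 := by
      have e1 := E (r + 1)
      have e2 := cE (j + 1)
      rw [show 2 * (r + 1) = 2 * r + 1 + 1 by ring, h1] at e1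
      rw [show 2 * (j + 1) = 2 * j + 1 + 1 by ring] at e2
      rcases e1 with ⟨u, v⟩ | ⟨u, v⟩ <;> rcases e2 with ⟨u', v'⟩ | ⟨u', v'⟩
      · omega
      · rw [u] at v'; exact absurd v' (by decide)
      · rw [u] at v'; exact absurd v' (by decide)
      · omega
    refine ⟨r, fun k hk => ?_⟩
    have := hq (2 * k) (by omega)
    simp only
    rw [← hdd (r + k), show 2 * (r + k) + 1 = 2 * r + 1 + 2 * k by ring, this,
      show 2 * (j + k) + 1 = 2 * j + 1 + 2 * k by ring]
    exact dpar _ _ _ (by omega)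

/-- Window of length `n` at position `p`. -/
def win {α : Type*} (f : ℕ → α) (p n : ℕ) : List α := (List.range n).map fun k => f (p + k)

/-- Pairs of letters of opposite parity. -/
def oppPairs : List (Fin 4 × Fin 4) :=
  [(0, 1), (0, 3), (1, 0), (1, 2), (2, 1), (2, 3), (3, 0), (3, 2)]

/-- Length-`n` factors of images of pairs, with their residues. -/
def facs (n : ℕ) : List (List (Fin 2) × ℕ) :=
  oppPairs.flatMap fun ab => (List.range 19).map fun r =>
    (((g2 ab.1 ++ g2 ab.2).drop r).take n, r)

/-- Binary code of a word. -/
def enc (l : List (Fin 2)) : ℕ := l.foldl (fun a v => 2 * a + v.val) 0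

/-- Codes of the factors of length 14, with their residues modulo 19. -/
def syncTab : List (ℕ × ℕ) :=
  [(669, 0), (906, 17), (965, 0), (986, 17), (1339, 1), (1341, 5), (1441, 8), (1812, 18), (1931,
  1), (1972, 18), (2678, 2), (2682, 6), (2883, 9), (3625, 0), (3792, 7), (3862, 2), (3906, 11),
  (3907, 11), (3945, 0), (4263, 17), (4322, 15), (4337, 17), (4342, 15), (5044, 5), (5072, 9),
  (5357, 3), (5364, 7), (5767, 10), (6684, 12), (6686, 12), (6778, 6), (7251, 1), (7585, 8),
  (7725, 3), (7813, 12), (7815, 12), (7891, 1), (8526, 18), (8645, 16), (8674, 18), (8685, 16),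
  (8862, 4), (8912, 7), (10088, 6), (10145, 10), (10323, 16), (10353, 14), (10360, 16), (10363,
  14), (10714, 4), (10728, 8), (11534, 11), (11535, 11), (11581, 5), (12623, 3), (12648, 6),
  (13353, 15), (13368, 13), (13372, 15), (13373, 13), (13556, 7), (13959, 10), (13982, 4),
  (14503, 2), (14516, 5), (14868, 14), (14878, 14), (15171, 9), (15183, 3), (15450, 4), (15626,
  13), (15631, 13), (15783, 2)]

/-- Lookup in a table. -/
def look (n : ℕ) : List (ℕ × ℕ) → ℕ
  | [] => 19
  | (a, b) :: l => bif Nat.beq n a then b else look n l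

/-- Codes of the factors of length `L + 1` for `4 ≤ L < 14`. -/
def smallTab : List (List ℕ) :=
  [[1, 2, 3, 5, 7, 8, 9, 10, 11, 13, 14, 15, 16, 17, 19, 20, 22, 24, 26, 27, 28, 29, 30],
  [2, 3, 5, 7, 10, 11, 14, 15, 16, 19, 20, 22, 26, 28, 29, 30, 33, 34, 39, 40, 41, 45, 49, 52,
  54, 56, 58, 59, 60, 61],
  [5, 7, 10, 11, 14, 15, 20, 22, 28, 29, 30, 33, 39, 41, 45, 52, 56, 59, 60, 61, 66, 67, 69, 78,
  79, 80, 83, 90, 98, 104, 105, 109, 113, 116, 118, 120, 122, 123],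
  [10, 14, 15, 20, 22, 28, 30, 41, 45, 56, 59, 60, 61, 66, 67, 78, 79, 83, 90, 104, 105, 113,
  118, 120, 122, 123, 133, 135, 138, 139, 157, 158, 161, 167, 180, 197, 208, 211, 218, 226,
  232, 237, 241, 244, 246],
  [20, 28, 30, 41, 45, 56, 60, 61, 83, 90, 113, 118, 120, 122, 123, 133, 135, 157, 158, 167,
  180, 208, 211, 226, 237, 241, 244, 246, 266, 270, 271, 276, 278, 315, 317, 322, 323, 334,
  335, 360, 361, 394, 395, 417, 423, 436, 453, 464, 474, 482, 488, 493],
  [41, 56, 60, 61, 83, 90, 113, 120, 123, 167, 180, 226, 237, 241, 244, 246, 266, 270, 271, 315,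
  317, 334, 335, 360, 417, 423, 453, 474, 482, 488, 493, 532, 540, 542, 553, 557, 630, 634,
  645, 647, 669, 670, 720, 723, 788, 790, 834, 835, 847, 872, 873, 906, 907, 929, 948, 965,
  976, 986],
  [83, 113, 120, 123, 167, 180, 226, 241, 246, 334, 335, 360, 453, 474, 482, 488, 493, 532, 540,
  542, 630, 634, 669, 670, 720, 835, 847, 906, 948, 965, 976, 986, 1065, 1080, 1084, 1085,
  1107, 1114, 1261, 1268, 1290, 1294, 1295, 1339, 1341, 1441, 1447, 1577, 1581, 1669, 1671,
  1694, 1744, 1747, 1812, 1814, 1858, 1859, 1896, 1897, 1931, 1953, 1972],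
  [167, 226, 241, 246, 334, 335, 360, 453, 482, 493, 669, 670, 720, 906, 948, 965, 976, 986,
  1065, 1080, 1084, 1085, 1261, 1268, 1339, 1341, 1441, 1671, 1694, 1812, 1896, 1931, 1953,
  1972, 2131, 2161, 2168, 2171, 2215, 2228, 2522, 2536, 2580, 2588, 2590, 2678, 2682, 2883,
  2895, 3155, 3162, 3338, 3342, 3343, 3389, 3489, 3495, 3625, 3629, 3717, 3719, 3792, 3795,
  3862, 3906, 3907, 3945],
  [334, 453, 482, 493, 669, 670, 720, 906, 965, 986, 1339, 1341, 1441, 1812, 1896, 1931, 1953,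
  1972, 2131, 2161, 2168, 2171, 2522, 2536, 2678, 2682, 2883, 3342, 3343, 3389, 3625, 3792,
  3862, 3906, 3907, 3945, 4263, 4322, 4337, 4342, 4431, 4456, 5044, 5072, 5161, 5176, 5180,
  5181, 5357, 5364, 5767, 5790, 6311, 6324, 6676, 6684, 6686, 6778, 6979, 6991, 7251, 7258,
  7434, 7439, 7585, 7591, 7725, 7813, 7815, 7891],
  [669, 906, 965, 986, 1339, 1341, 1441, 1812, 1931, 1972, 2678, 2682, 2883, 3625, 3792, 3862,
  3906, 3907, 3945, 4263, 4322, 4337, 4342, 5044, 5072, 5357, 5364, 5767, 6684, 6686, 6778,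
  7251, 7585, 7725, 7813, 7815, 7891, 8526, 8645, 8674, 8685, 8862, 8912, 10088, 10145, 10323,
  10353, 10360, 10363, 10714, 10728, 11534, 11535, 11581, 12623, 12648, 13353, 13368, 13372,
  13373, 13556, 13959, 13982, 14503, 14516, 14868, 14878, 15171, 15183, 15450, 15626, 15631,
  15783]]

theorem syncTab_ok :
    (facs 14).all (fun u => Nat.beq (look (enc u.1) syncTab) u.2) = true := by
  decide +kernel

theorem facs_sync : ∀ u ∈ facs 14, ∀ v ∈ facs 14, u.1 = v.1 → u.2 = v.2 := by
  intro u hu v hv h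
  have h1 := Nat.eq_of_beq_eq_true (List.all_eq_true.1 syncTab_ok u hu)
  have h2 := Nat.eq_of_beq_eq_true (List.all_eq_true.1 syncTab_ok v hv)
  rw [← h1, ← h2, h]

/-- Membership test. -/
def inTab (L n : ℕ) : Bool := (smallTab.getD (L - 4) []).any (Nat.beq n)

/-- Code of the next window of an `L`-periodic word. -/
def nextCode (L n : ℕ) : ℕ := 2 * (n % 2 ^ L) + (n % 2 ^ L) / 2 ^ (L - 1)

/-- Do the first `k` windows starting with `n` all have codes in the table? -/
def walk (L : ℕ) : ℕ → ℕ → Bool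
  | 0, _ => true
  | k + 1, n => inTab L n && walk L k (nextCode L n)

theorem smallTab_ok : ((List.range 14).drop 4).all (fun L =>
    (facs (L + 1)).all fun u => inTab L (enc u.1)) = true := by
  decide +kernel

theorem walk_false : ((List.range 14).drop 4).all (fun L =>
    (smallTab.getD (L - 4) []).all fun n => !(walk L (2 * L) n)) = true := by
  decide +kernel

theorem enc_win_succ (f : ℕ → Fin 2) (p n : ℕ) :
    enc (win f p (n + 1)) = 2 * enc (win f p n) + (f (p + n)).val := by
  simp [enc, win, List.range_succ, List.foldl_append]

theorem enc_win_lt (f : ℕ → Fin 2) (p n : ℕ) : enc (win f p n) < 2 ^ n := by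
  induction n with
  | zero => simp [enc, win]
  | succ n ih =>
    rw [enc_win_succ, pow_succ]
    have := (f (p + n)).isLt
    omega

theorem enc_win_cons (f : ℕ → Fin 2) (p n : ℕ) :
    enc (win f p (n + 1)) = (f p).val * 2 ^ n + enc (win f (p + 1) n) := by
  induction n with
  | zero => simp [enc, win]
  | succ n ih =>
    rw [enc_win_succ, ih, enc_win_succ f (p + 1) n, show p + 1 + n = p + (n + 1) by ring]
    ring

theorem nextCode_win (f : ℕ → Fin 2) (L p : ℕ) (hL : 1 ≤ L) (hper : ∀ n, f (n + L) = f n) :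
    nextCode L (enc (win f p (L + 1))) = enc (win f (p + 1) (L + 1)) := by
  have h1 := enc_win_cons f p L
  have h2 := enc_win_lt f (p + 1) L
  have h3 : enc (win f p (L + 1)) % 2 ^ L = enc (win f (p + 1) L) := by
    rw [h1, Nat.mul_add_mod_self_right, Nat.mod_eq_of_lt h2]
  rw [nextCode, h3, enc_win_succ f (p + 1) L, hper]
  congr 1
  obtain ⟨m, rfl⟩ : ∃ m, L = m + 1 := ⟨L - 1, by omega⟩
  rw [enc_win_cons f (p + 1) m, Nat.add_sub_cancel, Nat.add_comm,
    Nat.add_mul_div_right _ _ (by positivity), Nat.div_eq_of_lt (enc_win_lt f _ m), zero_add]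

theorem facs_small (L : ℕ) (hL : 4 ≤ L) (hL' : L < 14) (c : ℕ → Fin 2)
    (hper : ∀ n, c (n + L) = c n)
    (hmem : ∀ p, ∃ r, (win c p (L + 1), r) ∈ facs (L + 1)) : False := by
  have hLm : L ∈ (List.range 14).drop 4 := by
    interval_cases L <;> decide
  have hin : ∀ p, inTab L (enc (win c p (L + 1))) = true := by
    intro p
    obtain ⟨r, hr⟩ := hmem p
    exact List.all_eq_true.1 (List.all_eq_true.1 smallTab_ok L hLm) _ hr
  have hwalk : ∀ k p, walk L k (enc (win c p (L + 1))) = true := by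
    intro k
    induction k with
    | zero => intro p; rfl
    | succ k ih =>
      intro p
      rw [walk, hin p, nextCode_win c L p (by omega) hper, ih (p + 1)]
      rfl
  obtain ⟨m, hm, hm'⟩ := List.any_eq_true.1 (hin 0)
  have := List.all_eq_true.1 (List.all_eq_true.1 walk_false L hLm) m hm
  rw [← Nat.eq_of_beq_eq_true hm', hwalk] at this
  exact absurd this (by decide)

theorem win_getD {α : Type*} (f : ℕ → α) (p n k : ℕ) (z : α) (hk : k < n) :
    (win f p n).getD k z = f (p + k) := by
  simp [win, List.getD, hk]

theorem win_mem_facs (b4 : ℕ → Fin 4) (par : ∀ n, (b4 n).val % 2 = n % 2) (q n : ℕ)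
    (hn : n ≤ 20) :
    (win (fun n => (g2 (b4 (n / 19))).getD (n % 19) 0) q n, q % 19) ∈ facs n := by
  have hp : ∀ a b : Fin 4, a.val % 2 ≠ b.val % 2 → (a, b) ∈ oppPairs := by decide
  have hlen : ∀ a, (g2 a).length = 19 := by decide
  simp only [facs, List.mem_flatMap, List.mem_map, List.mem_range, Prod.mk.injEq]
  refine ⟨(b4 (q / 19), b4 (q / 19 + 1)), hp _ _ ?_, q % 19, Nat.mod_lt _ (by norm_num), ?_, rfl⟩
  · rw [par, par]; omega
  · apply List.ext_getElem
    · simp [win, hlen]; omega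
    · intro k h1 h2
      have hk : k < n := by simpa [win] using h2
      simp only [win, List.getElem_take, List.getElem_drop, List.getElem_map, List.getElem_range]
      rw [List.getElem_append]
      split
      · rename_i h
        rw [hlen] at h
        have e1 : (q + k) / 19 = q / 19 := by omega
        have e2 : (q + k) % 19 = q % 19 + k := by omega
        rw [e1, e2, List.getD_eq_getElem]
      · rename_i h
        rw [hlen] at h
        have e1 : (q + k) / 19 = q / 19 + 1 := by omega
        have e2 : (q + k) % 19 = q % 19 + k - 19 := by omega
        simp only [e1, e2, hlen]
        rw [List.getD_eq_getElem]

theorem win_congr {α : Type*} {f g : ℕ → α} {p q n : ℕ} (h : ∀ k < n, f (p + k) = g (q + k)) :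
    win f p n = win g q n := by
  apply List.map_congr_left
  intro k hk
  exact h k (List.mem_range.1 hk)

theorem g2_suffix : ∀ a b : Fin 4,
    (∀ s ∈ List.range 19, 6 ≤ s → (g2 a).getD s 0 = (g2 b).getD s 0) → a = b := by
  decide +kernel

theorem g2_prefix : ∀ a b : Fin 4,
    (∀ s ∈ List.range 7, (g2 a).getD s 0 = (g2 b).getD s 0) → a = b := by
  decide +kernel

theorem image_avoid (b4 : ℕ → Fin 4) (hb0 : b4 0 = 0)
    (hfix : ∀ n, [b4 (2 * n), b4 (2 * n + 1)] = mb4 (b4 n)) (L : ℕ) (hL : 4 ≤ L)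
    (c : ℕ → Fin 2) : ¬ BadPer (fun n => (g2 (b4 (n / 19))).getD (n % 19) 0) L c := by
  intro hc0
  have par := fun n => (b4_even b4 hb0 hfix n).2.2
  have hmem := win_mem_facs b4 par
  have hx : ∀ n s, s < 19 → (fun n => (g2 (b4 (n / 19))).getD (n % 19) 0) (19 * n + s)
      = (g2 (b4 n)).getD s 0 := by
    intro n s hs
    have e1 : (19 * n + s) / 19 = n := by omega
    have e2 : (19 * n + s) % 19 = s := by omega
    simp only [e1, e2]
  generalize (fun n => (g2 (b4 (n / 19))).getD (n % 19) 0) = x at hc0 hmem hx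
  by_cases hs : L < 14
  · refine facs_small L hL hs c hc0.1 fun p => ?_
    obtain ⟨q, hq⟩ := hc0.2 p
    have hw : win x q (L + 1) = win c p (L + 1) := win_congr fun k hk => hq k (by omega)
    rw [← hw]
    exact ⟨_, hmem q (L + 1) (by omega)⟩
  · have sync : ∀ q q', (∀ k < 14, x (q + k) = x (q' + k)) → q % 19 = q' % 19 := by
      intro q q' h
      exact facs_sync _ (hmem q 14 (by omega)) _ (hmem q' 14 (by omega)) (win_congr h)
    obtain ⟨q0, hq0⟩ := hc0.2 0
    have res : ∀ p q, (∀ k ≤ L, x (q + k) = c (p + k)) → q % 19 = (q0 + p) % 19 := by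
      intro p
      induction p with
      | zero =>
        intro q hq
        apply sync
        intro k hk
        rw [hq k (by omega), add_zero, hq0 k (by omega)]
      | succ p ihp =>
        intro q hq
        obtain ⟨q1, hq1⟩ := hc0.2 p
        have h1 := ihp q1 hq1
        have : q % 19 = (q1 + 1) % 19 := by
          apply sync
          intro k hk
          rw [hq k (by omega), add_assoc q1, hq1 (1 + k) (by omega)]
          congr 1; omega
        omega
    have hL19 : L % 19 = 0 := by
      have := res L q0 (fun k hk => by
        rw [hq0 k hk, add_comm L k, hc0.1 k, zero_add])
      omega
    obtain ⟨M, rfl⟩ : ∃ M, L = 19 * M := ⟨L / 19, by omega⟩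
    -- realign
    have hc := hc0.shift (19 - q0 % 19)
    have res' : ∀ p q, (∀ k ≤ 19 * M, x (q + k) = c (p + k + (19 - q0 % 19))) →
        q % 19 = p % 19 := by
      intro p q hq
      have := res (p + (19 - q0 % 19)) q (fun k hk => by
        rw [hq k hk]; congr 1; omega)
      omega
    generalize 19 - q0 % 19 = t at hc res'
    have hd : ∀ j, ∃ a, ∀ s < 19, c (19 * j + s + t) = (g2 a).getD s 0 := by
      intro j
      obtain ⟨q, hq⟩ := hc.2 (19 * j)
      have := res' _ _ hq
      obtain ⟨r, rfl⟩ : ∃ r, q = 19 * r := ⟨q / 19, by omega⟩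
      refine ⟨b4 r, fun s hs => ?_⟩
      rw [← hx r s hs, hq s (by omega)]
    choose d hd using hd
    refine b4_avoid b4 hb0 hfix M (by omega) d ⟨fun j => ?_, fun j => ?_⟩
    · apply g2_prefix
      intro s hs
      rw [List.mem_range] at hs
      rw [← hd _ s (by omega), ← hd _ s (by omega)]
      have := hc.1 (19 * j + s)
      simp only at this
      rw [← this]; congr 1; ring
    · obtain ⟨q, hq⟩ := hc.2 (19 * j + 6)
      have := res' _ _ hq
      obtain ⟨r, rfl⟩ : ∃ r, q = 19 * r + 6 := ⟨q / 19, by omega⟩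
      refine ⟨r, fun k hk => ?_⟩
      rcases Nat.eq_zero_or_pos k with rfl | hk0
      · apply g2_suffix
        intro s hs hs6
        rw [List.mem_range] at hs
        rw [← hd _ s hs, ← hx _ s hs]
        have := hq (s - 6) (by omega)
        rw [show 19 * (r + 0) + s = 19 * r + 6 + (s - 6) by omega, this]
        congr 1; omega
      · apply g2_prefix
        intro s hs
        rw [List.mem_range] at hs
        rw [← hd _ s (by omega), ← hx _ s (by omega)]
        have := hq (19 * k + s - 6) (by omega)
        rw [show 19 * (r + k) + s = 19 * r + 6 + (19 * k + s - 6) by omega, this]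
        congr 1; omega

theorem occ_badPer {α : Type*} (z : α) (x : ℕ → α) (t : ℕ) (ht : 1 ≤ t) (h : ℕ → List α)
    (hocc : CircOcc t h x) : ∃ L c, t ≤ L ∧ BadPer x L c := by
  obtain ⟨hne, hfac⟩ := hocc
  let T : ℕ → List α := fun n => (List.range n).flatMap fun j => h (j % t)
  have Tsucc : ∀ n, T (n + 1) = T n ++ h (n % t) := by
    intro n
    simp [T, List.range_succ, List.flatMap_append]
  have Tadd : ∀ n, T (t + n) = T t ++ T n := by
    intro n
    simp [T, List.range_add, List.flatMap_append, List.flatMap_map]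
  have Tfrag : ∀ i, T (i + (t + 1)) = T i ++ (circFragment t i).flatMap h := by
    intro i
    simp only [T, circFragment]
    rw [List.range_add, List.flatMap_append, List.flatMap_map, List.flatMap_map]
  have hlenT : ∀ n, n ≤ (T n).length := by
    intro n
    induction n with
    | zero => simp
    | succ n ihn =>
      rw [Tsucc, List.length_append]
      have := List.length_pos_iff.2 (hne (n % t) (Nat.mod_lt _ (by omega)))
      omega
  have hL := hlenT t
  have hLpos : 0 < (T t).length := by omega
  have Tpre : ∀ n m, T n <+: T (n + m) := by
    intro n m
    simp only [T, List.range_add, List.flatMap_append]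
    exact List.prefix_append _ _
  have Tget : ∀ n k, k < (T n).length → (T n).getD k z = (T t).getD (k % (T t).length) z := by
    intro n
    induction n using Nat.strong_induction_on with
    | _ n ih =>
    intro k hk
    by_cases hn : n < t
    · obtain ⟨m, rfl⟩ : ∃ m, t = n + m := ⟨t - n, by omega⟩
      obtain ⟨s, hs⟩ := Tpre n m
      have hlt : k < (T (n + m)).length := by rw [← hs, List.length_append]; omega
      rw [Nat.mod_eq_of_lt hlt, ← hs, List.getD_append _ _ _ _ hk]
    · obtain ⟨m, rfl⟩ : ∃ m, n = t + m := ⟨n - t, by omega⟩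
      rw [Tadd] at hk ⊢
      by_cases hkL : k < (T t).length
      · rw [Nat.mod_eq_of_lt hkL, List.getD_append _ _ _ _ hkL]
      · rw [List.length_append] at hk
        rw [List.getD_append_right _ _ _ _ (by omega), ih m (by omega) _ (by omega),
          Nat.mod_eq_sub_mod (by omega : k ≥ (T t).length)]
  refine ⟨(T t).length, fun n => (T t).getD (n % (T t).length) z, hL, fun n => by simp, ?_⟩
  intro p
  have hex : ∀ n p, p < (T n).length → ∃ i < n, (T i).length ≤ p ∧ p < (T (i + 1)).length := by
    intro n
    induction n with
    | zero => intro p hp; simp [T] at hp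
    | succ n ihn =>
      intro p hp
      by_cases hp' : p < (T n).length
      · obtain ⟨i, hi, h2⟩ := ihn p hp'
        exact ⟨i, by omega, h2⟩
      · exact ⟨n, by omega, by omega, hp⟩
  obtain ⟨i, hi, h1, h2⟩ := hex t (p % (T t).length) (Nat.mod_lt _ hLpos)
  obtain ⟨q, hq⟩ := hfac i hi
  have hlen : (T (i + (t + 1))).length = (T t).length + (T (i + 1)).length := by
    rw [show i + (t + 1) = t + (i + 1) by ring, Tadd, List.length_append]
  have hlen' := hlen
  rw [Tfrag, List.length_append] at hlen'
  have hget : ∀ k < ((circFragment t i).flatMap h).length,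
      x (q + k) = (T t).getD (((T i).length + k) % (T t).length) z := by
    intro k hk
    rw [← Tget (i + (t + 1)) _ (by omega), Tfrag, List.getD_append_right _ _ _ _ (by omega),
      Nat.add_sub_cancel_left, hq]
    exact (win_getD x q _ k z hk).symm
  refine ⟨q + (p % (T t).length - (T i).length), fun k hk => ?_⟩
  rw [add_assoc, hget _ (by omega)]
  congr 1
  rw [← add_assoc, Nat.add_sub_cancel' h1, Nat.mod_add_mod]

/-- If `b₄` is the fixed point starting with `0` of the morphism
`0 ↦ 01, 1 ↦ 21, 2 ↦ 03, 3 ↦ 23`, then the infinite binary word `g₂(b₄)`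
avoids every circular formula `C_i` with `i ≥ 4`. -/
theorem stmt_8 (b4 : ℕ → Fin 4) (hb0 : b4 0 = 0)
    (hfix : ∀ n, [b4 (2 * n), b4 (2 * n + 1)] = mb4 (b4 n)) :
    ∀ i, 4 ≤ i →
      ¬ ∃ h : ℕ → List (Fin 2),
          CircOcc i h (fun n => (g2 (b4 (n / 19))).getD (n % 19) 0) := by
  rintro i hi ⟨h, hocc⟩
  obtain ⟨L, c, hL, hc⟩ := occ_badPer 0 _ i (by omega) h hocc
  exact image_avoid b4 hb0 hfix L (by omega) c hc
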